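/- For every Schwartz function f : ℝ → ℝ and every x ∈ ℝ, the renormalized second-order fractional derivative converges to the ordinary second derivative: the limit as α → 2 from below of Γ(1+α) (sin(απ/2)/π) ∫_{0}^{∞} (f(x+ξ) - 2f(x) + f(x-ξ)) ξ^{-(α+1)} dξ equals f''(x). -/

import Mathlib

open MeasureTheory Real Filter

/-!
With `s = 2 - α` and `h ξ = (f (x + ξ) - 2 f x + f (x - ξ)) / ξ ^ 2`, the integral is
`∫ ξ ^ (s - 1) h ξ` over `(0, ∞)`. The kernels `s ξ ^ (s - 1)` have mass one on `(0, 1]` and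
concentrate at `0` as `s → 0⁺`, so `s ∫ ξ ^ (s - 1) h ξ` tends to `h (0⁺)`, which is `f'' x` by
Taylor's formula. The prefactor `Γ(1 + α) sin (α π / 2) / π` vanishes at `α = 2` exactly like
`2 - α = s`.
-/

open Set Asymptotics
open scoped Topology ENNReal

theorem integral_Ioc_mul_rpow_sub_one {s : ℝ} (hs : 0 < s) :
    ∫ t in Ioc (0 : ℝ) 1, s * t ^ (s - 1) = 1 := by
  rw [← intervalIntegral.integral_of_le zero_le_one, intervalIntegral.integral_const_mul,
    integral_rpow (Or.inl (by linarith)), sub_add_cancel, one_rpow, zero_rpow hs.ne', sub_zero,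
    mul_one_div_cancel hs.ne']

theorem tendstoUniformlyOn_mul_rpow_sub_one {δ : ℝ} (hδ : 0 < δ) :
    TendstoUniformlyOn (fun s t : ℝ => s * t ^ (s - 1)) 0 (𝓝[>] 0) (Ici δ) := by
  have hbound : Tendsto (fun s : ℝ => s * δ ^ (s - 1)) (𝓝[>] 0) (𝓝 0) := by
    have hcont : Continuous fun s : ℝ => s * δ ^ (s - 1) :=
      continuous_id.mul (continuous_const.rpow (by fun_prop) fun _ => Or.inl hδ.ne')
    simpa using (hcont.tendsto 0).mono_left nhdsWithin_le_nhds
  rw [Metric.tendstoUniformlyOn_iff]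
  intro ε hε
  filter_upwards [hbound.eventually_lt_const hε, Ioo_mem_nhdsGT zero_lt_one]
    with s hsε ⟨hs0, hs1⟩ t ht
  have ht0 : 0 < t := hδ.trans_le ht
  calc dist 0 (s * t ^ (s - 1)) = s * t ^ (s - 1) := by
        rw [dist_zero_left, norm_of_nonneg (by positivity)]
    _ ≤ s * δ ^ (s - 1) :=
        mul_le_mul_of_nonneg_left (rpow_le_rpow_of_nonpos hδ ht (by linarith)) hs0.le
    _ < ε := hsε

theorem tendsto_smul_integral_rpow_sub_one_smul {E : Type*} [NormedAddCommGroup E]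
    [NormedSpace ℝ E] [CompleteSpace E] {h : ℝ → E} {a : E} (hint : IntegrableOn h (Ioi 0))
    (hlim : Tendsto h (𝓝[>] 0) (𝓝 a)) :
    Tendsto (fun s : ℝ => s • ∫ t in Ioi (0 : ℝ), t ^ (s - 1) • h t) (𝓝[>] 0) (𝓝 a) := by
  simp_rw [← integral_smul, smul_smul]
  refine tendsto_setIntegral_peak_smul_of_integrableOn_of_tendsto measurableSet_Ioi
    measurableSet_Ioc Ioc_subset_Ioi_self (Ioc_mem_nhdsGT zero_lt_one) measure_Ioc_lt_top.ne
    ?nonneg ?away ?mass ?measurable hint hlim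
  case nonneg =>
    filter_upwards [self_mem_nhdsWithin] with s hs t ht
    exact mul_nonneg (le_of_lt hs) (rpow_nonneg (le_of_lt ht) _)
  case away =>
    intro u hu hu0
    obtain ⟨δ, hδ, hsub⟩ := exists_Ico_subset_of_mem_nhds (hu.mem_nhds hu0) (exists_gt 0)
    refine (tendstoUniformlyOn_mul_rpow_sub_one hδ).mono fun t ⟨ht, htu⟩ => ?_
    exact le_of_not_gt fun htδ => htu (hsub ⟨le_of_lt ht, htδ⟩)
  case mass =>
    refine tendsto_const_nhds.congr' ?_
    filter_upwards [self_mem_nhdsWithin] with s hs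
    exact (integral_Ioc_mul_rpow_sub_one hs).symm
  case measurable =>
    exact .of_forall fun s => Measurable.aestronglyMeasurable (by fun_prop)

section SymmSecondDiff

variable {E : Type*} [NormedAddCommGroup E] [NormedSpace ℝ E] {f f' : ℝ → E} {a : E} {x : ℝ}

/-- The symmetric second difference of `f` at `x` with step `ξ`, not divided by `ξ ^ 2`: the
integrand of the fractional derivative without its power weight. -/
def symmSecondDiff (f : ℝ → E) (x ξ : ℝ) : E :=
  f (x + ξ) - (2 : ℝ) • f x + f (x - ξ)

theorem memLp_top_symmSecondDiff (hf : MemLp f ∞) (x : ℝ) : MemLp (symmSecondDiff f x) ∞ :=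
  ((hf.comp_measurePreserving (measurePreserving_add_left volume x)).sub (memLp_top_const _)).add
    (hf.comp_measurePreserving (Measure.measurePreserving_sub_left volume x))

theorem hasDerivAt_symmSecondDiff {ξ : ℝ} {b c : E} (hadd : HasDerivAt f b (x + ξ))
    (hsub : HasDerivAt f c (x - ξ)) : HasDerivAt (symmSecondDiff f x) (b - c) ξ := by
  rw [sub_eq_add_neg]
  exact ((hadd.comp_const_add x ξ).sub_const _).add (hsub.comp_const_sub x ξ)

theorem isLittleO_symm_diff_sub_smul (hf' : HasDerivAt f' a x) :
    (fun ξ => f' (x + ξ) - f' (x - ξ) - (2 * ξ) • a) =o[𝓝 0] fun ξ : ℝ => ξ := by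
  have hadd := hasDerivAt_iff_isLittleO_nhds_zero.1 hf'
  have hsub := hadd.comp_tendsto (k := Neg.neg) (by simpa using (continuous_neg.tendsto (0 : ℝ)))
  refine (hadd.sub (hsub.trans_isBigO (isBigO_refl _ _).neg_left)).congr_left fun ξ => ?_
  simp only [Function.comp_apply, ← sub_eq_add_neg]
  module

theorem isLittleO_symmSecondDiff_sub_smul (hf : ∀ᶠ y in 𝓝 x, HasDerivAt f (f' y) y)
    (hf' : HasDerivAt f' a x) :
    (fun ξ => symmSecondDiff f x ξ - ξ ^ 2 • a) =o[𝓝 0] fun ξ : ℝ => ξ ^ 2 := by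
  obtain ⟨ε, hε, hball⟩ := Metric.eventually_nhds_iff_ball.1 hf
  have hderiv : ∀ ξ ∈ Metric.ball (0 : ℝ) ε,
      HasDerivWithinAt (fun ξ => symmSecondDiff f x ξ - ξ ^ 2 • a)
        (f' (x + ξ) - f' (x - ξ) - (2 * ξ) • a) (Metric.ball 0 ε) ξ := fun ξ hξ =>
    ((hasDerivAt_symmSecondDiff (hball _ (by simpa using hξ)) (hball _ (by simpa using hξ))).sub
      (by simpa using (hasDerivAt_pow 2 ξ).smul_const a)).hasDerivWithinAt
  have hO := (convex_ball (0 : ℝ) ε).isLittleO_pow_succ_real (n := 1) (Metric.mem_ball_self hε)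
    hderiv (by simpa using (isLittleO_symm_diff_sub_smul hf').mono nhdsWithin_le_nhds)
  rw [nhdsWithin_eq_nhds.2 (Metric.ball_mem_nhds 0 hε)] at hO
  have hzero : symmSecondDiff f x 0 = 0 := by
    simp only [symmSecondDiff, add_zero, sub_zero]
    module
  simpa [hzero] using hO

theorem tendsto_inv_sq_smul_symmSecondDiff (hf : ∀ᶠ y in 𝓝 x, HasDerivAt f (f' y) y)
    (hf' : HasDerivAt f' a x) :
    Tendsto (fun ξ : ℝ => (ξ ^ 2)⁻¹ • symmSecondDiff f x ξ) (𝓝[≠] 0) (𝓝 a) := by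
  have herr := ((isLittleO_symmSecondDiff_sub_smul hf hf').tendsto_inv_smul_nhds_zero).mono_left
    (nhdsWithin_le_nhds (s := {0}ᶜ))
  rw [← zero_add a]
  refine (herr.add_const a).congr' ?_
  filter_upwards [self_mem_nhdsWithin] with ξ hξ
  rw [smul_sub, inv_smul_smul₀ (pow_ne_zero 2 hξ), sub_add_cancel]

theorem integrableOn_Ioi_inv_sq_smul {g : ℝ → E} (hg : MemLp g ∞)
    (hlim : Tendsto (fun ξ : ℝ => (ξ ^ 2)⁻¹ • g ξ) (𝓝[>] 0) (𝓝 a)) :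
    IntegrableOn (fun ξ : ℝ => (ξ ^ 2)⁻¹ • g ξ) (Ioi 0) := by
  have hmeas : AEStronglyMeasurable fun ξ : ℝ => (ξ ^ 2)⁻¹ • g ξ :=
    AEStronglyMeasurable.smul (Measurable.aestronglyMeasurable (by fun_prop)) hg.1
  obtain ⟨s, hs, hnear⟩ : IntegrableAtFilter (fun ξ : ℝ => (ξ ^ 2)⁻¹ • g ξ) (𝓝[>] 0) :=
    hlim.integrableAtFilter ⟨univ, univ_mem, by simpa using hmeas⟩
      (Measure.finiteAt_nhdsWithin volume (0 : ℝ) _)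
  obtain ⟨δ, hδ, hsub⟩ := mem_nhdsGT_iff_exists_Ioc_subset.1 hs
  have hfar : IntegrableOn (fun ξ : ℝ => (ξ ^ 2)⁻¹ • g ξ) (Ioi δ) := by
    have hinv : IntegrableOn (fun ξ : ℝ => (ξ ^ 2)⁻¹) (Ioi δ) := by
      refine (integrableOn_Ioi_rpow_of_lt (a := -2) (by norm_num) hδ).congr_fun (fun ξ hξ => ?_)
        measurableSet_Ioi
      simp only [rpow_neg (hδ.le.trans (le_of_lt hξ)), rpow_two]
    exact hinv.smul_of_top_left (hg.restrict _)
  rw [← Ioc_union_Ioi_eq_Ioi (le_of_lt hδ)]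
  exact (hnear.mono_set hsub).union hfar

theorem integral_Ioi_rpow_smul_inv_sq_smul (g : ℝ → E) (α : ℝ) :
    ∫ ξ in Ioi (0 : ℝ), ξ ^ (2 - α - 1) • (ξ ^ 2)⁻¹ • g ξ =
      ∫ ξ in Ioi (0 : ℝ), ξ ^ (-(α + 1)) • g ξ := by
  refine setIntegral_congr_fun measurableSet_Ioi fun ξ (hξ : 0 < ξ) => ?_
  have hpow : ξ ^ (2 - α - 1) * (ξ ^ 2)⁻¹ = ξ ^ (-(α + 1)) := by
    rw [← rpow_two, ← rpow_neg hξ.le, ← rpow_add hξ]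
    ring_nf
  simp only [smul_smul, hpow]

end SymmSecondDiff

theorem Gamma_mul_sin_eq_sinc_mul (α : ℝ) :
    Gamma (1 + α) * (sin (α * π / 2) / π) =
      Gamma (1 + α) / 2 * sinc ((2 - α) * π / 2) * (2 - α) := by
  have hsin : sin (α * π / 2) = sin ((2 - α) * π / 2) := by
    rw [← sin_pi_sub]
    ring_nf
  rcases eq_or_ne α 2 with rfl | hα
  · simp
  · have : 2 - α ≠ 0 := sub_ne_zero.2 hα.symm
    rw [hsin, sinc_of_ne_zero (by positivity)]
    field_simp

theorem tendsto_Gamma_mul_sinc :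
    Tendsto (fun α => Gamma (1 + α) / 2 * sinc ((2 - α) * π / 2)) (𝓝 2) (𝓝 1) := by
  have hGamma : ContinuousAt (fun α => Gamma (1 + α)) 2 :=
    ContinuousAt.comp (f := fun α : ℝ => 1 + α)
      (differentiableAt_Gamma fun m => by linarith [m.cast_nonneg (α := ℝ)]).continuousAt
      (by fun_prop)
  have hsinc : Continuous fun α => sinc ((2 - α) * π / 2) := continuous_sinc.comp (by fun_prop)
  have hGamma_two : Gamma (1 + 2) = 2 := by
    simpa [add_comm] using Gamma_nat_eq_factorial 2
  simpa [hGamma_two] using (hGamma.tendsto.div_const 2).mul (hsinc.tendsto 2)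

theorem fractional_deriv_tendsto_second_deriv_general {E : Type*} [NormedAddCommGroup E]
    [NormedSpace ℝ E] [CompleteSpace E] {f f' : ℝ → E} {a : E} {x : ℝ} (hfb : MemLp f ∞)
    (hf : ∀ᶠ y in 𝓝 x, HasDerivAt f (f' y) y) (hf' : HasDerivAt f' a x) :
    Tendsto (fun α : ℝ => (Gamma (1 + α) * (sin (α * π / 2) / π)) •
        ∫ ξ in Ioi (0 : ℝ), ξ ^ (-(α + 1)) • symmSecondDiff f x ξ) (𝓝[<] 2) (𝓝 a) := by
  have hquot := (tendsto_inv_sq_smul_symmSecondDiff hf hf').mono_left (nhdsGT_le_nhdsNE 0)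
  have hint := integrableOn_Ioi_inv_sq_smul (memLp_top_symmSecondDiff hfb x) hquot
  have hflip : Tendsto (fun α : ℝ => 2 - α) (𝓝[<] 2) (𝓝[>] 0) :=
    tendsto_nhdsWithin_iff.2
      ⟨(Continuous.tendsto' (by fun_prop) 2 0 (sub_self 2)).mono_left nhdsWithin_le_nhds,
        eventually_mem_nhdsWithin.mono fun _ hα => sub_pos.2 (mem_Iio.1 hα)⟩
  have hmain := (tendsto_Gamma_mul_sinc.mono_left nhdsWithin_le_nhds).smul
    ((tendsto_smul_integral_rpow_sub_one_smul hint hquot).comp hflip)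
  rw [one_smul] at hmain
  refine hmain.congr fun α => ?_
  rw [Function.comp_apply, integral_Ioi_rpow_smul_inv_sq_smul, smul_smul, Gamma_mul_sin_eq_sinc_mul]

/-- The renormalized second-order fractional derivative converges to the ordinary second
derivative: as `α → 2⁻`,
`Γ(1+α) (sin(απ/2)/π) ∫_0^∞ (f(x+ξ) - 2f(x) + f(x-ξ)) ξ^{-(α+1)} dξ → f''(x)`. -/
theorem fractional_deriv_tendsto_second_deriv (f : SchwartzMap ℝ ℝ) (x : ℝ) :
    Tendsto (fun α : ℝ => Real.Gamma (1 + α) * (Real.sin (α * π / 2) / π) *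
        ∫ ξ in Set.Ioi (0 : ℝ), (f (x + ξ) - 2 * f x + f (x - ξ)) * ξ ^ (-(α + 1)))
      (nhdsWithin 2 (Set.Iio 2)) (nhds (deriv (deriv f) x)) := by
  have hf' : Differentiable ℝ (deriv f) := (f.smooth 2).differentiable_deriv_two
  simpa [symmSecondDiff, mul_comm] using fractional_deriv_tendsto_second_deriv_general
    (f.memLp ⊤) (.of_forall fun y => (f.differentiable y).hasDerivAt) (hf' x).hasDerivAt
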